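/- For a nonnegative Borel measure μ on ℂ with μ(Γ) = 0, one has ∫_ℂ (∑_{n≥1} v_n/|z−γ_n|²) dμ(z) < ∞ if and only if both ∑_{m≥1} ∫_{Ω_m} v_m/|z−γ_m|² dμ(z) < ∞ and ∑_{m≥1} v_m ∑_{j=m+1}^∞ ∫_{Ω_j} |z|^{-2} dμ(z) + ∑_{m≥1} (v_m/|γ_m|²) ∑_{j=1}^{m-1} μ(Ω_j) < ∞ hold. -/

import Mathlib

open MeasureTheory Filter Topology
open scoped ENNReal NNReal

noncomputable section

/-! Sequences are indexed by `ℕ`, with the Lean index `n : ℕ` corresponding to the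
paper's index `n + 1` (so `γ 0` is the paper's `γ_1`, `Omega γ 0` is the paper's `Ω_1`,
the paper's partial sum `∑_{m=1}^{n} v_m` is `∑ m ∈ Finset.range (n+1), v m`, and the
paper's tail `∑_{m=n+1}^∞ c_m` is `∑' m : ℕ, c (n+1+m)`). -/

/-- The annular shells `Ω_n` (here `Omega γ 0` is the paper's `Ω_1`). -/
def Omega (γ : ℕ → ℂ) : ℕ → Set ℂ
  | 0 => {z : ℂ | ‖z‖ < (‖γ 0‖ + ‖γ 1‖) / 2}
  | n + 1 => {z : ℂ | (‖γ n‖ + ‖γ (n + 1)‖) / 2 ≤ ‖z‖ ∧ ‖z‖ < (‖γ (n + 1)‖ + ‖γ (n + 2)‖) / 2}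

/-- The sparseness condition `inf_n |γ_{n+1}|/|γ_n| > 1`. -/
def Sparse (γ : ℕ → ℂ) : Prop := ∃ c : ℝ, 1 < c ∧ ∀ n, c * ‖γ n‖ ≤ ‖γ (n + 1)‖

/-- The admissibility condition `∑_n v_n/(1+|γ_n|²) < ∞`. -/
def Admissible (γ : ℕ → ℂ) (v : ℕ → ℝ) : Prop :=
  Summable fun n => v n / (1 + ‖γ n‖ ^ 2)

/-- Membership in `ℓ²_v`. -/
def MemL2v (v : ℕ → ℝ) (a : ℕ → ℂ) : Prop := Summable fun n => ‖a n‖ ^ 2 * v n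

/-- The squared norm `‖a‖²_v = ∑_n |a_n|² v_n`. -/
def normSqV (v : ℕ → ℝ) (a : ℕ → ℂ) : ℝ := ∑' n, ‖a n‖ ^ 2 * v n

/-- The set `(Γ,v)* = {z : ∑_n v_n/|z-γ_n|² < ∞}`. -/
def GammaStar (γ : ℕ → ℂ) (v : ℕ → ℝ) : Set ℂ :=
  {z : ℂ | Summable fun n => v n / ‖z - γ n‖ ^ 2}

/-- The function of `𝓗(Γ,v)` with coefficient sequence `a`:
`f(z) = ∑_n a_n v_n/(z-γ_n)`. -/
def Hfun (γ : ℕ → ℂ) (v : ℕ → ℝ) (a : ℕ → ℂ) (z : ℂ) : ℂ :=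
  ∑' n, a n * (v n : ℂ) / (z - γ n)

/-- `μ` is a Carleson measure for `𝓗(Γ,v)`:
`∫_ℂ |f|² dμ ≤ C ‖a‖²_v` for every `f ∈ 𝓗(Γ,v)` with coefficients `a ∈ ℓ²_v`. -/
def IsCarleson (γ : ℕ → ℂ) (v : ℕ → ℝ) (μ : Measure ℂ) : Prop :=
  ∃ C : ℝ, 0 < C ∧ ∀ a : ℕ → ℂ, MemL2v v a →
    ∫⁻ z, (‖Hfun γ v a z‖₊ : ℝ≥0∞) ^ 2 ∂μ ≤ ENNReal.ofReal (C * normSqV v a)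

/-- The sequence `(a k)` of coefficient sequences converges weakly to zero in `ℓ²_v`:
it is norm bounded and `∑_n a^{(k)}_n v_n conj(b_n) → 0` for every `b ∈ ℓ²_v`. -/
def WeaklyNull (v : ℕ → ℝ) (a : ℕ → ℕ → ℂ) : Prop :=
  (∃ M : ℝ, ∀ k, normSqV v (a k) ≤ M) ∧
    ∀ b : ℕ → ℂ, MemL2v v b →
      Tendsto (fun k => ∑' n, a k n * (v n : ℂ) * (starRingEnd ℂ) (b n)) atTop (𝓝 0)

/-- `μ` is a compact (vanishing) Carleson measure for `𝓗(Γ,v)`: it is Carleson and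
`∫_ℂ |f_k|² dμ → 0` for every weakly null sequence in `𝓗(Γ,v)`. -/
def IsCompactCarleson (γ : ℕ → ℂ) (v : ℕ → ℝ) (μ : Measure ℂ) : Prop :=
  IsCarleson γ v μ ∧
    ∀ a : ℕ → ℕ → ℂ, (∀ k, MemL2v v (a k)) → WeaklyNull v a →
      Tendsto (fun k => ∫⁻ z, (‖Hfun γ v (a k) z‖₊ : ℝ≥0∞) ^ 2 ∂μ) atTop (𝓝 0)

/-- The local quantity `∫_{Ω_n} v_n/|z-γ_n|² dμ(z)`. -/
def localTerm (γ : ℕ → ℂ) (v : ℕ → ℝ) (μ : Measure ℂ) (n : ℕ) : ℝ≥0∞ :=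
  ∫⁻ z in Omega γ n, ENNReal.ofReal (v n / ‖z - γ n‖ ^ 2) ∂μ

/-- The global quantity
`(∑_{m=1}^n v_m)·(∑_{m=n+1}^∞ ∫_{Ω_m} |z|⁻² dμ) + (∑_{m=n+1}^∞ v_m/|γ_m|²)·(∑_{m=1}^n μ(Ω_m))`. -/
def globalTerm (γ : ℕ → ℂ) (v : ℕ → ℝ) (μ : Measure ℂ) (n : ℕ) : ℝ≥0∞ :=
  ENNReal.ofReal (∑ m ∈ Finset.range (n + 1), v m) *
      (∑' m : ℕ, ∫⁻ z in Omega γ (n + 1 + m), ENNReal.ofReal (1 / ‖z‖ ^ 2) ∂μ) +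
    ENNReal.ofReal (∑' m : ℕ, v (n + 1 + m) / ‖γ (n + 1 + m)‖ ^ 2) *
      (∑ m ∈ Finset.range (n + 1), μ (Omega γ m))

theorem aux_upper {a b η v : ℝ} (hη : 0 < η) (hb : 0 < b) (hv : 0 ≤ v) (h : η * b ≤ a) :
    ENNReal.ofReal (v / a ^ 2) ≤ ENNReal.ofReal (1 / η ^ 2) * ENNReal.ofReal (v / b ^ 2) := by
  rw [← ENNReal.ofReal_mul (by positivity)]
  apply ENNReal.ofReal_le_ofReal
  have h0 : 0 < η * b := by positivity
  calc v / a ^ 2 ≤ v / (η * b) ^ 2 := by gcongr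
    _ = 1 / η ^ 2 * (v / b ^ 2) := by field_simp

theorem mem_Omega_iff (γ : ℕ → ℂ) (hm : Monotone fun n => ‖γ n‖) (n : ℕ) (z : ℂ) :
    z ∈ Omega γ n ↔ (∀ k < n, (‖γ k‖ + ‖γ (k + 1)‖) / 2 ≤ ‖z‖) ∧
      ‖z‖ < (‖γ n‖ + ‖γ (n + 1)‖) / 2 := by
  cases n with
  | zero => simp [Omega]
  | succ n =>
    simp only [Omega, Set.mem_setOf_eq]
    refine ⟨fun h => ⟨fun k hk => ?_, h.2⟩, fun h => ⟨h.1 n (by omega), h.2⟩⟩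
    have h1 : ‖γ k‖ ≤ ‖γ n‖ := hm (by omega)
    have h2 : ‖γ (k + 1)‖ ≤ ‖γ (n + 1)‖ := hm (by omega)
    linarith [h.1]

theorem measurableSet_Omega (γ : ℕ → ℂ) (n : ℕ) : MeasurableSet (Omega γ n) := by
  cases n with
  | zero => exact measurableSet_lt measurable_norm measurable_const
  | succ n =>
    exact (measurableSet_le measurable_const measurable_norm).inter
      (measurableSet_lt measurable_norm measurable_const)

theorem disjoint_Omega (γ : ℕ → ℂ) (hm : Monotone fun n => ‖γ n‖) :
    Pairwise (Function.onFun Disjoint (Omega γ)) := by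
  intro i j hij
  rw [Function.onFun, Set.disjoint_left]
  intro z hi hj
  rw [mem_Omega_iff γ hm] at hi hj
  rcases lt_or_gt_of_ne hij with h | h
  · linarith [hj.1 i h, hi.2]
  · linarith [hi.1 j h, hj.2]

theorem iUnion_Omega (γ : ℕ → ℂ) (hm : Monotone fun n => ‖γ n‖) (h0 : γ 0 ≠ 0)
    (hs : Sparse γ) : ⋃ n, Omega γ n = Set.univ := by
  classical
  obtain ⟨c, hc, hcs⟩ := hs
  have hpow : ∀ n, c ^ n * ‖γ 0‖ ≤ ‖γ n‖ := by
    intro n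
    induction n with
    | zero => simp
    | succ n ih =>
      calc c ^ (n + 1) * ‖γ 0‖ = c * (c ^ n * ‖γ 0‖) := by ring
        _ ≤ c * ‖γ n‖ := by gcongr
        _ ≤ _ := hcs n
  refine Set.eq_univ_of_forall fun z => ?_
  have hex : ∃ n, ‖z‖ < (‖γ n‖ + ‖γ (n + 1)‖) / 2 := by
    have hp : 0 < ‖γ 0‖ := norm_pos_iff.mpr h0
    obtain ⟨n, hn⟩ := pow_unbounded_of_one_lt (‖z‖ / ‖γ 0‖) hc
    rw [div_lt_iff₀ hp] at hn
    have h2 : ‖γ n‖ ≤ ‖γ (n + 1)‖ := hm (by omega)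
    exact ⟨n, by linarith [hpow n]⟩
  refine Set.mem_iUnion.mpr ⟨Nat.find hex, (mem_Omega_iff γ hm _ z).mpr ⟨fun k hk => ?_, ?_⟩⟩
  · exact not_lt.mp (Nat.find_min hex hk)
  · exact Nat.find_spec hex

theorem lintegral_split (γ : ℕ → ℂ) (hm : Monotone fun n => ‖γ n‖) (h0 : γ 0 ≠ 0)
    (hs : Sparse γ) (μ : Measure ℂ) (f : ℂ → ℝ≥0∞) (m : ℕ) :
    ∫⁻ z, f z ∂μ = ((∑ j ∈ Finset.range m, ∫⁻ z in Omega γ j, f z ∂μ) +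
      ∫⁻ z in Omega γ m, f z ∂μ) + ∑' j, ∫⁻ z in Omega γ (m + 1 + j), f z ∂μ := by
  rw [← setLIntegral_univ, ← iUnion_Omega γ hm h0 hs,
    lintegral_iUnion (measurableSet_Omega γ) (disjoint_Omega γ hm), ← Finset.sum_range_succ,
    ← ENNReal.summable.sum_add_tsum_nat_add' (k := m + 1)]
  simp only [add_comm]

theorem geom_far (γ : ℕ → ℂ) (hm : Monotone fun n => ‖γ n‖) (h0 : ∀ n, γ n ≠ 0)
    {c : ℝ} (hc : 1 < c) (hcs : ∀ n, c * ‖γ n‖ ≤ ‖γ (n + 1)‖) {m j : ℕ} (hj : m < j)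
    {z : ℂ} (hz : z ∈ Omega γ j) :
    0 < ‖z‖ ∧ (c - 1) / (2 * c) * ‖z‖ ≤ ‖z - γ m‖ ∧ (1 / 2) * ‖z - γ m‖ ≤ ‖z‖ := by
  have h1 := ((mem_Omega_iff γ hm j z).mp hz).1 m hj
  have h2 := hcs m
  have hp : 0 < ‖γ m‖ := norm_pos_iff.mpr (h0 m)
  have h3 := norm_sub_norm_le z (γ m)
  have h4 := norm_sub_le z (γ m)
  have h5 : (1 + c) * ‖γ m‖ ≤ 2 * ‖z‖ := by linarith
  have h6 : ‖γ m‖ ≤ ‖z‖ := by nlinarith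
  refine ⟨by linarith, ?_, by linarith⟩
  rw [div_mul_eq_mul_div, div_le_iff₀ (by linarith)]
  nlinarith

theorem geom_near (γ : ℕ → ℂ) (hm : Monotone fun n => ‖γ n‖)
    {c : ℝ} (hc : 1 < c) (hcs : ∀ n, c * ‖γ n‖ ≤ ‖γ (n + 1)‖) {m j : ℕ} (hj : j < m)
    {z : ℂ} (hz : z ∈ Omega γ j) :
    (c - 1) / (2 * c) * ‖γ m‖ ≤ ‖z - γ m‖ ∧ (1 / 2) * ‖z - γ m‖ ≤ ‖γ m‖ := by
  have h1 := ((mem_Omega_iff γ hm j z).mp hz).2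
  obtain ⟨k, rfl⟩ : ∃ k, m = k + 1 := ⟨m - 1, by omega⟩
  have h2 := hcs k
  have h7 : ‖γ j‖ ≤ ‖γ k‖ := hm (by omega)
  have h8 : ‖γ (j + 1)‖ ≤ ‖γ (k + 1)‖ := hm (by omega)
  have h9 : ‖γ k‖ ≤ ‖γ (k + 1)‖ := hm (by omega)
  have h3 := norm_sub_norm_le (γ (k + 1)) z
  rw [norm_sub_rev] at h3
  have h4 := norm_sub_le z (γ (k + 1))
  refine ⟨?_, by linarith⟩
  rw [div_mul_eq_mul_div, div_le_iff₀ (by linarith)]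
  nlinarith

/-- `∫_ℂ ∑_n v_n/|z-γ_n|² dμ < ∞` if and only if both
`∑_m ∫_{Ω_m} v_m/|z-γ_m|² dμ < ∞` and
`∑_m v_m ∑_{j=m+1}^∞ ∫_{Ω_j} |z|⁻² dμ + ∑_m (v_m/|γ_m|²) ∑_{j=1}^{m-1} μ(Ω_j) < ∞`. -/
theorem lintegral_kernel_lt_top_iff (γ : ℕ → ℂ) (v : ℕ → ℝ)
    (hγ_inj : Function.Injective γ) (hγ_ne : ∀ n, γ n ≠ 0)
    (hγ_mono : Monotone fun n => ‖γ n‖) (hγ_sparse : Sparse γ)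
    (hv : ∀ n, 0 < v n) (hadm : Admissible γ v)
    (μ : Measure ℂ) (hμΓ : μ (Set.range γ) = 0) :
    (∫⁻ z, ∑' n, ENNReal.ofReal (v n / ‖z - γ n‖ ^ 2) ∂μ) < ⊤ ↔
      (∑' m, ∫⁻ z in Omega γ m, ENNReal.ofReal (v m / ‖z - γ m‖ ^ 2) ∂μ) < ⊤ ∧
        (∑' m, ENNReal.ofReal (v m) *
            ∑' j, ∫⁻ z in Omega γ (m + 1 + j), ENNReal.ofReal (1 / ‖z‖ ^ 2) ∂μ) +
          (∑' m, ENNReal.ofReal (v m / ‖γ m‖ ^ 2) * ∑ j ∈ Finset.range m, μ (Omega γ j)) < ⊤ := by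
  obtain ⟨c, hc, hcs⟩ := id hγ_sparse
  set η : ℝ := (c - 1) / (2 * c) with hη_def
  have hη : 0 < η := div_pos (by linarith) (by linarith)
  have hγp : ∀ n, 0 < ‖γ n‖ := fun n => norm_pos_iff.mpr (hγ_ne n)
  set K : ℝ≥0∞ := ENNReal.ofReal (1 / η ^ 2) with hK
  set L : ℝ≥0∞ := ENNReal.ofReal (1 / (1 / 2 : ℝ) ^ 2) with hL
  have hKt : K ≠ ⊤ := ENNReal.ofReal_ne_top
  have hLt : L ≠ ⊤ := ENNReal.ofReal_ne_top
  set f : ℕ → ℂ → ℝ≥0∞ := fun n z => ENNReal.ofReal (v n / ‖z - γ n‖ ^ 2) with hf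
  have hfm : ∀ n, Measurable (f n) := fun n => by
    simp only [hf]
    fun_prop
  set A : ℕ → ℝ≥0∞ := fun m => ∑ j ∈ Finset.range m, ∫⁻ z in Omega γ j, f m z ∂μ with hA
  set B : ℕ → ℝ≥0∞ := fun m => ∑' j, ∫⁻ z in Omega γ (m + 1 + j), f m z ∂μ with hB
  set D : ℕ → ℝ≥0∞ := fun m => ∫⁻ z in Omega γ m, f m z ∂μ with hD
  set A' : ℕ → ℝ≥0∞ := fun m =>
    ENNReal.ofReal (v m / ‖γ m‖ ^ 2) * ∑ j ∈ Finset.range m, μ (Omega γ j) with hA'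
  set B' : ℕ → ℝ≥0∞ := fun m => ENNReal.ofReal (v m) *
    ∑' j, ∫⁻ z in Omega γ (m + 1 + j), ENNReal.ofReal (1 / ‖z‖ ^ 2) ∂μ with hB'
  have hmain : ∫⁻ z, ∑' n, f n z ∂μ = (∑' m, A m + ∑' m, D m) + ∑' m, B m := by
    rw [lintegral_tsum fun n => (hfm n).aemeasurable, ← ENNReal.tsum_add, ← ENNReal.tsum_add]
    exact tsum_congr fun m => lintegral_split γ hγ_mono (hγ_ne 0) hγ_sparse μ (f m) m
  have hA'eq : ∀ m, A' m = ∑ j ∈ Finset.range m,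
      ∫⁻ _ in Omega γ j, ENNReal.ofReal (v m / ‖γ m‖ ^ 2) ∂μ := fun m => by
    simp only [hA', Finset.mul_sum, setLIntegral_const]
  have hB'eq : ∀ m, B' m = ∑' j,
      ∫⁻ z in Omega γ (m + 1 + j), ENNReal.ofReal (v m / ‖z‖ ^ 2) ∂μ := fun m => by
    simp only [hB', ← ENNReal.tsum_mul_left]
    refine tsum_congr fun j => ?_
    rw [← lintegral_const_mul' _ _ ENNReal.ofReal_ne_top]
    refine lintegral_congr fun z => ?_
    rw [← ENNReal.ofReal_mul (hv m).le, mul_one_div]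
  have hAle : ∀ m, A m ≤ K * A' m := fun m => by
    rw [hA'eq, Finset.mul_sum]
    refine Finset.sum_le_sum fun j hj => ?_
    rw [← lintegral_const_mul' _ _ hKt]
    refine setLIntegral_mono' (measurableSet_Omega γ j) fun z hz => ?_
    exact aux_upper hη (hγp m) (hv m).le
      (geom_near γ hγ_mono hc hcs (Finset.mem_range.mp hj) hz).1
  have hA'le : ∀ m, A' m ≤ L * A m := fun m => by
    rw [hA'eq, Finset.mul_sum]
    refine Finset.sum_le_sum fun j hj => ?_
    rw [← lintegral_const_mul' _ _ hLt]
    refine setLIntegral_mono' (measurableSet_Omega γ j) fun z hz => ?_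
    have hg := geom_near γ hγ_mono hc hcs (Finset.mem_range.mp hj) hz
    exact aux_upper (by norm_num) (lt_of_lt_of_le (mul_pos hη (hγp m)) hg.1) (hv m).le hg.2
  have hBle : ∀ m, B m ≤ K * B' m := fun m => by
    rw [hB'eq, ← ENNReal.tsum_mul_left]
    refine ENNReal.tsum_le_tsum fun j => ?_
    rw [← lintegral_const_mul' _ _ hKt]
    refine setLIntegral_mono' (measurableSet_Omega γ _) fun z hz => ?_
    have hg := geom_far γ hγ_mono hγ_ne hc hcs (m := m) (by omega) hz
    exact aux_upper hη hg.1 (hv m).le hg.2.1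
  have hB'le : ∀ m, B' m ≤ L * B m := fun m => by
    rw [hB'eq, ← ENNReal.tsum_mul_left]
    refine ENNReal.tsum_le_tsum fun j => ?_
    rw [← lintegral_const_mul' _ _ hLt]
    refine setLIntegral_mono' (measurableSet_Omega γ _) fun z hz => ?_
    have hg := geom_far γ hγ_mono hγ_ne hc hcs (m := m) (by omega) hz
    exact aux_upper (by norm_num) (lt_of_lt_of_le (mul_pos hη hg.1) hg.2.1) (hv m).le hg.2.2
  have key : ∀ {X Y : ℕ → ℝ≥0∞} {M : ℝ≥0∞}, M ≠ ⊤ → (∀ m, X m ≤ M * Y m) →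
      ∑' m, Y m < ⊤ → ∑' m, X m < ⊤ := by
    intro X Y M hM h hY
    refine lt_of_le_of_lt (ENNReal.tsum_le_tsum h) ?_
    rw [ENNReal.tsum_mul_left]
    exact ENNReal.mul_lt_top hM.lt_top hY
  change ∫⁻ z, ∑' n, f n z ∂μ < ⊤ ↔ ∑' m, D m < ⊤ ∧ ∑' m, B' m + ∑' m, A' m < ⊤
  rw [hmain]
  simp only [ENNReal.add_lt_top]
  constructor
  · rintro ⟨⟨h1, h2⟩, h3⟩
    exact ⟨h2, key hLt hB'le h3, key hLt hA'le h1⟩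
  · rintro ⟨h2, h3, h1⟩
    exact ⟨⟨key hKt hAle h1, h2⟩, key hKt hBle h3⟩
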